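/- arXiv:1909.00220 — 2 statements merged into one kernel-verified Lean document; each statement's English description precedes it below -/
import Mathlib

section
/- Fix z ∈ ℂ with Re z ≥ 0. For every integer k ≥ 0 there exists a constant c_k = c(k,z) > 0 such that for all s > 0, all r > 0 and all integers j ≥ 0, the Fourier transform ĥ^z_{j,r}(t) = ∫_ℝ h^z_{j,r}(ξ) e^{−itξ} dξ satisfies ∫_{|t| ≥ s} |ĥ^z_{j,r}(t)| dt ≤ c_k s^{−k} r^{−k} 2^{(k − Re z)j}. -/
open Real MeasureTheory

/-- ψ(ξ) = e^{−1/ξ²} for ξ > 0 and 0 for ξ ≤ 0. -/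
noncomputable def psi (x : ℝ) : ℝ := if 0 < x then Real.exp (-1 / x ^ 2) else 0

/-- ψ₁(ξ) = ψ(ξ)ψ(1−ξ). -/
noncomputable def psi1 (x : ℝ) : ℝ := psi x * psi (1 - x)

/-- φ(ξ) = ψ₁(ξ + 5/4). -/
noncomputable def phiFn (x : ℝ) : ℝ := psi1 (x + 5 / 4)

/-- φ_j(ξ) = φ(2^j(ξ − 1)). -/
noncomputable def phiJ (j : ℕ) (x : ℝ) : ℝ := phiFn (2 ^ j * (x - 1))

/-- χ_j(ξ) = φ_j(ξ)/Σ_{i≥0} φ_i(ξ) where the denominator is positive, and 0 otherwise. -/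
noncomputable def chiJ (j : ℕ) (x : ℝ) : ℝ :=
  if 0 < ∑' i : ℕ, phiJ i x then phiJ j x / ∑' i : ℕ, phiJ i x else 0

/-- h^z_{j,r}(ξ) = (1 − ξ²/r²)_+^z e^{ξ²/r²} χ_j((ξ/r)²). -/
noncomputable def hzjr (z : ℂ) (j : ℕ) (r : ℝ) (x : ℝ) : ℂ :=
  (if 0 < 1 - x ^ 2 / r ^ 2 then ((1 - x ^ 2 / r ^ 2 : ℝ) : ℂ) ^ z else 0) *
    Complex.exp ((x ^ 2 / r ^ 2 : ℝ) : ℂ) * ((chiJ j ((x / r) ^ 2) : ℝ) : ℂ)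

/-!
By scaling one may take `r = 1`, where `h^z_{j,1}(x) = w_j(1 - x²) e^{x²}` with
`w_j(u) = u^z χ_j(1 - u)`. The profiles are dyadically self-similar,
`w_{2+n}(u) = 2^{-nz} w_2(2^n u)`, so up to a factor of modulus `2^{-j Re z}` the function
`h^z_{j,1}` is a fixed bump evaluated at `2^j (1 - x²)`. Each derivative costs `2^j`, while the
support has measure `O(2^{-j})`, whence `‖∂^m h^z_{j,1}‖₁ = O(2^{j(m - 1 - Re z)})`. This bounds
`|t|^m |ĥ(t)|`; taking `m = k` and `m = k + 2` gives decay of order `(1 + (t / 2^j)²)⁻¹` beyond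
`|t|^{-k}`, which can be integrated over `|t| ≥ s`.
-/

open Filter Topology Set
open scoped ContDiff FourierTransform

/-! ### Smooth extension by zero -/

theorem deriv_eq_zero_of_eqOn_Iic {E : Type*} [NormedAddCommGroup E] [NormedSpace ℝ E]
    {g : ℝ → E} {a : ℝ} (hg : Differentiable ℝ g) (hg0 : EqOn g 0 (Iic a)) :
    EqOn (deriv g) 0 (Iic a) := fun x hx =>
  (uniqueDiffOn_Iic a x hx).eq_deriv _ (hg x).hasDerivAt.hasDerivWithinAt
    ((hasDerivWithinAt_const x _ (0 : E)).congr hg0 (hg0 hx))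

theorem hasDerivAt_indicator_Ioi {E : Type*} [NormedAddCommGroup E] [NormedSpace ℝ E]
    {f f' : ℝ → E} {a : ℝ} (hf : ∀ x, HasDerivAt f (f' x) x) (ha : f a = 0) (ha' : f' a = 0)
    (x : ℝ) : HasDerivAt ((Ioi a).indicator f) ((Ioi a).indicator f' x) x := by
  rcases lt_trichotomy x a with hx | rfl | hx
  · rw [indicator_of_notMem (notMem_Ioi.2 hx.le)]
    refine (hasDerivAt_const x (0 : E)).congr_of_eventuallyEq ?_
    filter_upwards [Iio_mem_nhds hx] with y hy
    exact indicator_of_notMem (notMem_Ioi.2 hy.le) f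
  · have hx0 : (Ioi x).indicator f x = 0 := indicator_of_notMem self_notMem_Ioi f
    have hleft : HasDerivWithinAt ((Ioi x).indicator f) 0 (Iic x) x :=
      (hasDerivWithinAt_const x _ (0 : E)).congr
        (fun y hy => indicator_of_notMem (notMem_Ioi.2 hy) f) hx0
    have hright : HasDerivWithinAt ((Ioi x).indicator f) 0 (Ici x) x := by
      refine (ha' ▸ (hf x).hasDerivWithinAt).congr (fun y hy => ?_) (hx0.trans ha.symm)
      rcases (mem_Ici.1 hy).eq_or_lt with rfl | hlt
      · exact hx0.trans ha.symm
      · exact indicator_of_mem hlt f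
    rw [indicator_of_notMem self_notMem_Ioi, ← hasDerivWithinAt_univ, ← Iic_union_Ici]
    exact hleft.union hright
  · rw [indicator_of_mem (mem_Ioi.2 hx)]
    refine (hf x).congr_of_eventuallyEq ?_
    filter_upwards [Ioi_mem_nhds hx] with y hy
    exact indicator_of_mem hy f

theorem hasDerivAt_indicator_Ioi_mul_comp {p g q : ℝ → ℝ} {a b : ℝ}
    (hp : Differentiable ℝ p) (hg : Differentiable ℝ g) (hq : Differentiable ℝ q)
    (hg0 : EqOn g 0 (Iic b)) (hqa : q a ≤ b) (x : ℝ) :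
    HasDerivAt ((Ioi a).indicator fun x => p x * g (q x)) ((Ioi a).indicator
      ((fun x => deriv p x * g (q x)) + fun x => p x * deriv q x * deriv g (q x)) x) x := by
  refine hasDerivAt_indicator_Ioi (fun y => ?_) ?_ ?_ x
  · refine ((hp y).hasDerivAt.mul
      ((hg (q y)).hasDerivAt.comp y (hq y).hasDerivAt)).congr_deriv ?_
    simp only [Function.comp_apply, Pi.add_apply]
    ring
  · rw [hg0 hqa, Pi.zero_apply, mul_zero]
  · rw [Pi.add_apply, hg0 hqa, deriv_eq_zero_of_eqOn_Iic hg hg0 hqa, Pi.zero_apply, mul_zero,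
      mul_zero, add_zero]

theorem contDiff_indicator_Ioi_mul_comp {p g q : ℝ → ℝ} {a b : ℝ} (hp : ContDiff ℝ ∞ p)
    (hg : ContDiff ℝ ∞ g) (hq : ContDiff ℝ ∞ q) (hg0 : EqOn g 0 (Iic b)) (hqa : q a ≤ b) :
    ContDiff ℝ ∞ ((Ioi a).indicator fun x => p x * g (q x)) := by
  refine contDiff_infty.2 fun n => ?_
  have hq' := contDiff_infty_iff_deriv.1 hq
  induction n generalizing p g with
  | zero =>
    exact contDiff_zero.2 (continuous_iff_continuousAt.2 fun x =>
      (hasDerivAt_indicator_Ioi_mul_comp (hp.differentiable (by simp))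
        (hg.differentiable (by simp)) hq'.1 hg0 hqa x).continuousAt)
  | succ n ih =>
    have hp' := contDiff_infty_iff_deriv.1 hp
    have hg' := contDiff_infty_iff_deriv.1 hg
    have hd := hasDerivAt_indicator_Ioi_mul_comp hp'.1 hg'.1 hq'.1 hg0 hqa
    rw [Nat.cast_succ, contDiff_succ_iff_deriv]
    refine ⟨fun x => (hd x).differentiableAt, by simp, ?_⟩
    rw [funext fun x => (hd x).deriv, indicator_add']
    exact (ih hp'.2 hg hg0).add
      (ih (hp.mul hq'.2) hg'.2 (deriv_eq_zero_of_eqOn_Iic hg'.1 hg0))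

/-! ### Amplitudes concentrated on a thin shell -/

theorem integrable_iteratedDeriv_of_hasCompactSupport {E : Type*} [NormedAddCommGroup E]
    [NormedSpace ℝ E] {f : ℝ → E} {m : ℕ} (hf : ContDiff ℝ m f) (hfc : HasCompactSupport f) :
    Integrable (iteratedDeriv m f) := by
  refine (hf.continuous_iteratedDeriv m le_rfl).integrable_of_hasCompactSupport ?_
  rw [iteratedDeriv_eq_equiv_comp]
  exact (hfc.iteratedFDeriv (𝕜 := ℝ) m).comp_left (map_zero _)

theorem abs_mem_Icc_of_mul_one_sub_sq_mem_Icc {N b x : ℝ} (hN : 0 < N)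
    (hx : N * (1 - x ^ 2) ∈ Icc 0 b) : |x| ∈ Icc (1 - b / N) 1 := by
  have hx0 : 0 ≤ 1 - x ^ 2 := nonneg_of_mul_nonneg_right hx.1 hN
  have hxb : 1 - x ^ 2 ≤ b / N := (le_div_iff₀' hN).2 hx.2
  have hx1 : |x| ≤ 1 := (sq_le_one_iff_abs_le_one x).1 (by linarith)
  have hsq : x ^ 2 ≤ |x| := sq_abs x ▸ pow_le_of_le_one (abs_nonneg x) hx1 two_ne_zero
  exact ⟨by linarith, hx1⟩

/-- The amplitude `x ↦ B(N(1 - x²)) P(x)`. When `B` is supported in `[0, b]`, it is concentrated on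
the shell `1 - b / N ≤ |x| ≤ 1`, and each derivative costs a factor `N`. -/
def shellAmplitude {𝔸 : Type*} [Mul 𝔸] (B P : ℝ → 𝔸) (N x : ℝ) : 𝔸 :=
  B (N * (1 - x ^ 2)) * P x

section ShellAmplitude

variable {𝔸 : Type*} [NormedRing 𝔸] {B P : ℝ → 𝔸} {b N : ℝ}

theorem abs_mem_Icc_of_shellAmplitude_ne_zero (hBsupp : tsupport B ⊆ Icc 0 b) (hN : 0 < N) {x : ℝ}
    (hx : shellAmplitude B P N x ≠ 0) : |x| ∈ Icc (1 - b / N) 1 := by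
  have hBx : B (N * (1 - x ^ 2)) ≠ 0 := left_ne_zero_of_mul hx
  exact abs_mem_Icc_of_mul_one_sub_sq_mem_Icc hN (hBsupp (subset_tsupport B hBx))

theorem hasCompactSupport_shellAmplitude (hBsupp : tsupport B ⊆ Icc 0 b) (hN : 0 < N) :
    HasCompactSupport (shellAmplitude B P N) :=
  HasCompactSupport.intro (isCompact_Icc (a := -1) (b := 1)) fun _ hx => of_not_not fun hne =>
    hx (abs_le.1 (abs_mem_Icc_of_shellAmplitude_ne_zero hBsupp hN hne).2)

theorem exists_norm_shellAmplitude_le (hB : Continuous B) (hBsupp : tsupport B ⊆ Icc 0 b)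
    (hP : Continuous P) : ∃ C, 0 ≤ C ∧ ∀ N, 0 < N → ∀ x, ‖shellAmplitude B P N x‖ ≤ C := by
  obtain ⟨M, hM⟩ := hB.bounded_above_of_compact_support
    (isCompact_Icc.of_isClosed_subset isClosed_closure hBsupp)
  obtain ⟨M', hM'⟩ := isCompact_Icc.exists_bound_of_continuousOn (s := Icc (-1) 1) hP.continuousOn
  have hM0 : 0 ≤ M := (norm_nonneg _).trans (hM 0)
  have hM0' : 0 ≤ M' := (norm_nonneg _).trans (hM' 0 ⟨by norm_num, by norm_num⟩)
  refine ⟨M * M', by positivity, fun N hN x => ?_⟩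
  by_cases hx : shellAmplitude B P N x = 0
  · rw [hx, norm_zero]
    positivity
  · refine (norm_mul_le _ _).trans (mul_le_mul (hM _) (hM' x ?_) (norm_nonneg _) hM0)
    exact abs_le.1 (abs_mem_Icc_of_shellAmplitude_ne_zero hBsupp hN hx).2

theorem exists_integral_norm_shellAmplitude_le (hB : Continuous B) (hBsupp : tsupport B ⊆ Icc 0 b)
    (hP : Continuous P) (hb : 0 ≤ b) :
    ∃ C, ∀ N, 0 < N → ∫ x, ‖shellAmplitude B P N x‖ ≤ C / N := by
  obtain ⟨M, hM0, hM⟩ := exists_norm_shellAmplitude_le hB hBsupp hP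
  refine ⟨M * (2 * b), fun N hN => ?_⟩
  set S := Icc (-1) (-1 + b / N) ∪ Icc (1 - b / N) 1
  have hS : ∀ x ∉ S, ‖shellAmplitude B P N x‖ = 0 := fun x hx => by
    rw [norm_eq_zero]
    by_contra hne
    obtain ⟨hl, hr⟩ := abs_mem_Icc_of_shellAmplitude_ne_zero hBsupp hN hne
    rcases abs_cases x with ⟨habs, -⟩ | ⟨habs, -⟩ <;> rw [habs] at hl hr
    · exact hx (Or.inr ⟨hl, hr⟩)
    · exact hx (Or.inl ⟨by linarith, by linarith⟩)
  have hvol : volume.real S ≤ 2 * b / N := by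
    have hbN : 0 ≤ b / N := by positivity
    refine (measureReal_union_le _ _).trans_eq ?_
    rw [Real.volume_real_Icc_of_le (by linarith), Real.volume_real_Icc_of_le (by linarith)]
    ring
  calc ∫ x, ‖shellAmplitude B P N x‖
      = ∫ x in S, ‖shellAmplitude B P N x‖ :=
        (setIntegral_eq_integral_of_forall_compl_eq_zero hS).symm
    _ ≤ M * volume.real S := (le_norm_self _).trans <| norm_setIntegral_le_of_norm_le_const
        (isCompact_Icc.union isCompact_Icc).measure_lt_top fun x _ => by
          rw [norm_norm]
          exact hM N hN x
    _ ≤ M * (2 * b / N) := by gcongr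
    _ = M * (2 * b) / N := by ring

variable [NormedAlgebra ℝ 𝔸]

theorem contDiff_shellAmplitude {n : WithTop ℕ∞} (hB : ContDiff ℝ n B) (hP : ContDiff ℝ n P)
    (N : ℝ) : ContDiff ℝ n (shellAmplitude B P N) :=
  (hB.comp (by fun_prop)).mul hP

theorem deriv_shellAmplitude (hB : Differentiable ℝ B) (hP : Differentiable ℝ P) (N : ℝ) :
    deriv (shellAmplitude B P N) =
      N • shellAmplitude (deriv B) (fun x => (-2 * x) • P x) N +
        shellAmplitude B (deriv P) N := by
  ext x
  have hin : HasDerivAt (fun x : ℝ => N * (1 - x ^ 2)) (N * (-2 * x)) x :=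
    (((hasDerivAt_pow 2 x).const_sub 1).const_mul N).congr_deriv (by push_cast; ring)
  refine (((hB _).hasDerivAt.scomp x hin).mul (hP x).hasDerivAt).deriv.trans ?_
  simp only [Function.comp_apply, Pi.add_apply, Pi.smul_apply, shellAmplitude, smul_mul_assoc,
    mul_smul_comm, smul_smul]

theorem integral_norm_iteratedDeriv_succ_shellAmplitude_le (m : ℕ) (hB : ContDiff ℝ ∞ B)
    (hBsupp : tsupport B ⊆ Icc 0 b) (hP : ContDiff ℝ ∞ P) (hN : 0 < N) :
    ∫ x, ‖iteratedDeriv (m + 1) (shellAmplitude B P N) x‖ ≤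
      N * (∫ x, ‖iteratedDeriv m (shellAmplitude (deriv B) (fun x => (-2 * x) • P x) N) x‖) +
        ∫ x, ‖iteratedDeriv m (shellAmplitude B (deriv P) N) x‖ := by
  have hB' := contDiff_infty_iff_deriv.1 hB
  have hP' := contDiff_infty_iff_deriv.1 hP
  set F := shellAmplitude (deriv B) (fun x => (-2 * x) • P x) N
  set G := shellAmplitude B (deriv P) N
  have hF : ContDiff ℝ m F := contDiff_infty.1 (contDiff_shellAmplitude hB'.2 (by fun_prop) N) m
  have hG : ContDiff ℝ m G := contDiff_infty.1 (contDiff_shellAmplitude hB hP'.2 N) m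
  have hNF : ContDiff ℝ m (N • F) := hF.const_smul N
  have hFi : Integrable (iteratedDeriv m F) := integrable_iteratedDeriv_of_hasCompactSupport hF
    (hasCompactSupport_shellAmplitude (tsupport_deriv_subset.trans hBsupp) hN)
  have hGi : Integrable (iteratedDeriv m G) := integrable_iteratedDeriv_of_hasCompactSupport hG
    (hasCompactSupport_shellAmplitude hBsupp hN)
  have hiter : ∀ x, iteratedDeriv (m + 1) (shellAmplitude B P N) x =
      N • iteratedDeriv m F x + iteratedDeriv m G x := fun x => by
    rw [iteratedDeriv_succ', deriv_shellAmplitude hB'.1 hP'.1,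
      iteratedDeriv_add hNF.contDiffAt hG.contDiffAt, iteratedDeriv_const_smul hF.contDiffAt]
  rw [← integral_const_mul, ← integral_add (hFi.norm.const_mul N) hGi.norm]
  refine integral_mono_of_nonneg (Eventually.of_forall fun x => norm_nonneg _)
    ((hFi.norm.const_mul N).add hGi.norm) (Eventually.of_forall fun x => ?_)
  simp only [hiter]
  refine (norm_add_le _ _).trans_eq ?_
  rw [norm_smul, Real.norm_of_nonneg hN.le]

theorem exists_integral_norm_iteratedDeriv_shellAmplitude_le (m : ℕ) (hB : ContDiff ℝ ∞ B)
    (hBsupp : tsupport B ⊆ Icc 0 b) (hP : ContDiff ℝ ∞ P) (hb : 0 ≤ b) :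
    ∃ C, ∀ N, 1 ≤ N → ∫ x, ‖iteratedDeriv m (shellAmplitude B P N) x‖ ≤ C * N ^ m / N := by
  induction m generalizing B P with
  | zero =>
    obtain ⟨C, hC⟩ :=
      exists_integral_norm_shellAmplitude_le hB.continuous hBsupp hP.continuous hb
    exact ⟨C, fun N hN => by simpa using hC N (by linarith)⟩
  | succ m ih =>
    have hB' := (contDiff_infty_iff_deriv.1 hB).2
    have hP' := (contDiff_infty_iff_deriv.1 hP).2
    obtain ⟨C, hC⟩ := ih hB' (tsupport_deriv_subset.trans hBsupp)
      (P := fun x => (-2 * x) • P x) (by fun_prop)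
    obtain ⟨C', hC'⟩ := ih hB hBsupp hP'
    refine ⟨C + C', fun N hN => ?_⟩
    have hN0 : 0 < N := by linarith
    have hC0' : 0 ≤ C' * N ^ m / N := (integral_nonneg fun x => norm_nonneg _).trans (hC' N hN)
    calc ∫ x, ‖iteratedDeriv (m + 1) (shellAmplitude B P N) x‖
        ≤ N * (C * N ^ m / N) + C' * N ^ m / N :=
          (integral_norm_iteratedDeriv_succ_shellAmplitude_le m hB hBsupp hP hN0).trans <|
            add_le_add (mul_le_mul_of_nonneg_left (hC N hN) hN0.le) (hC' N hN)
      _ ≤ N * (C * N ^ m / N) + N * (C' * N ^ m / N) := by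
          gcongr
          exact le_mul_of_one_le_left hC0' hN
      _ = (C + C') * N ^ (m + 1) / N := by ring

end ShellAmplitude

/-! ### Fourier decay and tails -/

/-- The Fourier transform `f̂(t) = ∫ f(x) e^{-itx} dx` in the angular-frequency normalization,
related to Mathlib's `𝓕` by `f̂(t) = 𝓕 f (t / 2π)`. -/
noncomputable def angularFourier (f : ℝ → ℂ) (t : ℝ) : ℂ :=
  ∫ x : ℝ, f x * Complex.exp (-(Complex.I * t * x))

theorem angularFourier_eq_fourier (f : ℝ → ℂ) (t : ℝ) :
    angularFourier f t = 𝓕 f (t / (2 * π)) := by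
  rw [Real.fourier_eq', angularFourier]
  refine integral_congr_ae (Eventually.of_forall fun x => ?_)
  have hphase : -2 * π * inner ℝ x (t / (2 * π)) = -(t * x) := by
    simp only [RCLike.inner_apply, conj_trivial]
    field_simp
  simp only [hphase, smul_eq_mul]
  push_cast
  ring_nf

theorem abs_pow_mul_norm_angularFourier_le {f : ℝ → ℂ} {m : ℕ} (hf : ContDiff ℝ m f)
    (hfc : HasCompactSupport f) (t : ℝ) :
    |t| ^ m * ‖angularFourier f t‖ ≤ ∫ x, ‖iteratedDeriv m f x‖ := by
  have hderiv := congrFun (Real.fourier_iteratedDeriv (N := m) (n := m) hf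
    (fun n hn => integrable_iteratedDeriv_of_hasCompactSupport
      (hf.of_le (by exact_mod_cast hn)) hfc) le_rfl) (t / (2 * π))
  have hfactor : 2 * π * Complex.I * ((t / (2 * π) : ℝ) : ℂ) = t * Complex.I := by
    push_cast
    field_simp
  calc |t| ^ m * ‖angularFourier f t‖ = ‖𝓕 (iteratedDeriv m f) (t / (2 * π))‖ := by
        rw [hderiv, hfactor, angularFourier_eq_fourier, norm_smul, norm_pow, norm_mul,
          Complex.norm_I, Complex.norm_real, mul_one, Real.norm_eq_abs]
    _ ≤ ∫ x, ‖iteratedDeriv m f x‖ :=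
        VectorFourier.norm_fourierIntegral_le_integral_norm _ _ _ _ _

theorem angularFourier_comp_div (f : ℝ → ℂ) {r : ℝ} (hr : 0 < r) (t : ℝ) :
    angularFourier (fun x => f (x / r)) t = r * angularFourier f (r * t) := by
  have hscale := Measure.integral_comp_div
    (fun y : ℝ => f y * Complex.exp (-(Complex.I * (r * t : ℝ) * y))) r
  rw [abs_of_pos hr, Complex.real_smul] at hscale
  rw [angularFourier, angularFourier, ← hscale]
  refine integral_congr_ae (Eventually.of_forall fun x => ?_)
  have hr0 : (r : ℂ) ≠ 0 := Complex.ofReal_ne_zero.2 hr.ne'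
  have hphase : Complex.I * (r * t : ℝ) * (x / r : ℝ) = Complex.I * t * x := by
    push_cast
    field_simp
  simp only [hphase]

theorem setIntegral_norm_le_of_abs_div_pow_mul_le {E : Type*} [NormedAddCommGroup E]
    {F : ℝ → E} {k : ℕ} {A A' N s : ℝ} (hN : 0 < N) (hs : 0 < s)
    (hA : ∀ t, |t / N| ^ k * ‖F t‖ ≤ A) (hA' : ∀ t, |t / N| ^ (k + 2) * ‖F t‖ ≤ A') :
    ∫ t in {t : ℝ | s ≤ |t|}, ‖F t‖ ≤ π * (A + A') * N * (N / s) ^ k := by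
  have hA0 : 0 ≤ A + A' := add_nonneg ((by positivity : (0 : ℝ) ≤ _).trans (hA 0))
    ((by positivity : (0 : ℝ) ≤ _).trans (hA' 0))
  set g : ℝ → ℝ := fun t => (A + A') * (N / s) ^ k * (1 + (t / N) ^ 2)⁻¹ with hg
  have hgi : Integrable g := (integrable_inv_one_add_sq.comp_div hN.ne').const_mul _
  have hle : ∀ t, s ≤ |t| → ‖F t‖ ≤ g t := fun t ht => by
    have hweight : |t / N| ^ k * ((1 + (t / N) ^ 2) * ‖F t‖) ≤ A + A' := by
      refine le_trans (le_of_eq ?_) (add_le_add (hA t) (hA' t))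
      rw [← sq_abs (t / N)]
      ring
    have hsN : (s / N) ^ k ≤ |t / N| ^ k := by
      rw [abs_div, abs_of_pos hN]
      gcongr
    have hdecay : (s / N) ^ k * ((1 + (t / N) ^ 2) * ‖F t‖) ≤ A + A' :=
      (mul_le_mul_of_nonneg_right hsN (by positivity)).trans hweight
    simp only [hg]
    rw [← div_eq_mul_inv, le_div_iff₀' (by positivity), ← inv_div s N, inv_pow,
      ← div_eq_mul_inv, le_div_iff₀' (by positivity)]
    exact hdecay
  have hms : MeasurableSet {t : ℝ | s ≤ |t|} := measurableSet_le measurable_const measurable_norm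
  calc ∫ t in {t : ℝ | s ≤ |t|}, ‖F t‖
      ≤ ∫ t in {t : ℝ | s ≤ |t|}, g t :=
        integral_mono_of_nonneg (Eventually.of_forall fun t => norm_nonneg _) hgi.integrableOn
          ((ae_restrict_mem hms).mono hle)
    _ ≤ ∫ t, g t := setIntegral_le_integral hgi (Eventually.of_forall fun t => by positivity)
    _ = π * (A + A') * N * (N / s) ^ k := by
        rw [hg, integral_const_mul, Measure.integral_comp_div (fun t : ℝ => (1 + t ^ 2)⁻¹),
          integral_univ_inv_one_add_sq, abs_of_pos hN, smul_eq_mul]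
        ring

/-! ### The dyadic partition of unity -/

theorem psi_eq_indicator : psi = (Ioi 0).indicator fun x => 1 * expNegInvGlue (x ^ 2) := by
  ext x
  rw [psi, indicator_apply]
  split_ifs with h₁ h₂ h₂
  · rw [expNegInvGlue, if_neg (not_le.2 (pow_pos h₁ 2)), one_mul, neg_div, one_div]
  · exact absurd h₁ h₂
  · exact absurd h₂ h₁
  · rfl

theorem contDiff_psi : ContDiff ℝ ∞ psi := by
  rw [psi_eq_indicator]
  exact contDiff_indicator_Ioi_mul_comp contDiff_const expNegInvGlue.contDiff (contDiff_id.pow 2)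
    (fun x hx => expNegInvGlue.zero_of_nonpos hx) (by simp)

theorem psi_nonneg (x : ℝ) : 0 ≤ psi x := by
  unfold psi
  positivity

theorem psi_ne_zero_iff {x : ℝ} : psi x ≠ 0 ↔ 0 < x := by
  simp [psi, Real.exp_ne_zero]

theorem phiJ_eq_psi_mul_psi (j : ℕ) (x : ℝ) :
    phiJ j x = psi (5 / 4 - 2 ^ j * (1 - x)) * psi (2 ^ j * (1 - x) - 1 / 4) := by
  rw [phiJ, phiFn, psi1]
  ring_nf

theorem contDiff_phiJ (j : ℕ) : ContDiff ℝ ∞ (phiJ j) := by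
  rw [funext (phiJ_eq_psi_mul_psi j)]
  exact (contDiff_psi.comp (by fun_prop)).mul (contDiff_psi.comp (by fun_prop))

theorem phiJ_nonneg (j : ℕ) (x : ℝ) : 0 ≤ phiJ j x := by
  rw [phiJ_eq_psi_mul_psi]
  exact mul_nonneg (psi_nonneg _) (psi_nonneg _)

theorem phiJ_ne_zero_iff {j : ℕ} {x : ℝ} :
    phiJ j x ≠ 0 ↔ 2 ^ j * (1 - x) ∈ Ioo (1 / 4 : ℝ) (5 / 4) := by
  rw [phiJ_eq_psi_mul_psi, mul_ne_zero_iff, psi_ne_zero_iff, psi_ne_zero_iff, sub_pos, sub_pos,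
    and_comm, mem_Ioo]

theorem phiJ_add (i n : ℕ) (u : ℝ) : phiJ (i + n) (1 - u) = phiJ i (1 - 2 ^ n * u) := by
  rw [phiJ, phiJ, pow_add]
  ring_nf

theorem exists_forall_phiJ_eq_zero {a : ℝ} (ha : a < 1) :
    ∃ M, ∀ n ≥ M, ∀ x ≤ a, phiJ n x = 0 := by
  obtain ⟨M, hM⟩ := pow_unbounded_of_one_lt ((5 / 4) / (1 - a)) one_lt_two
  refine ⟨M, fun n hn x hx => of_not_not fun hne => ?_⟩
  have hlt := (phiJ_ne_zero_iff.1 hne).2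
  have hle : (2 : ℝ) ^ M * (1 - a) ≤ 2 ^ n * (1 - x) := by gcongr; norm_num
  rw [div_lt_iff₀ (sub_pos.2 ha)] at hM
  linarith

theorem tsum_phiJ_pos {x : ℝ} (h0 : 0 ≤ x) (h1 : x < 1) : 0 < ∑' i, phiJ i x := by
  obtain ⟨M, hM⟩ := exists_forall_phiJ_eq_zero h1
  have hsum : Summable fun i => phiJ i x :=
    summable_of_ne_finset_zero (s := Finset.range M) fun n hn =>
      hM n (not_lt.1 (Finset.mem_range.not.1 hn)) x le_rfl
  obtain ⟨n, hn, hn'⟩ := exists_nat_pow_near (one_le_one_div (sub_pos.2 h1) (by linarith))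
    (one_lt_two (α := ℝ))
  rw [le_div_iff₀ (sub_pos.2 h1)] at hn
  rw [div_lt_iff₀ (sub_pos.2 h1), pow_succ] at hn'
  exact hsum.tsum_pos (phiJ_nonneg · x) n ((phiJ_nonneg n x).lt_of_ne'
    (phiJ_ne_zero_iff.2 ⟨by linarith, by linarith⟩))

theorem contDiffAt_tsum_phiJ {x : ℝ} (hx : x < 1) :
    ContDiffAt ℝ ∞ (fun y => ∑' i, phiJ i y) x := by
  obtain ⟨a, hxa, ha⟩ := exists_between hx
  obtain ⟨M, hM⟩ := exists_forall_phiJ_eq_zero ha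
  have hfin : ContDiff ℝ ∞ fun y => ∑ i ∈ Finset.range M, phiJ i y :=
    ContDiff.sum fun i _ => contDiff_phiJ i
  refine hfin.contDiffAt.congr_of_eventuallyEq ?_
  filter_upwards [Iio_mem_nhds hxa] with y hy
  exact tsum_eq_sum fun n hn => hM n (not_lt.1 (Finset.mem_range.not.1 hn)) y (le_of_lt hy)

theorem chiJ_eq_div (j : ℕ) (x : ℝ) : chiJ j x = phiJ j x / ∑' i, phiJ i x := by
  rw [chiJ, ite_eq_left_iff, not_lt]
  intro h
  rw [h.antisymm (tsum_nonneg (phiJ_nonneg · x)), div_zero]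

theorem mem_Ioo_of_chiJ_ne_zero {j : ℕ} {x : ℝ} (h : chiJ j x ≠ 0) :
    2 ^ j * (1 - x) ∈ Ioo (1 / 4 : ℝ) (5 / 4) := by
  rw [chiJ_eq_div] at h
  exact phiJ_ne_zero_iff.1 (div_ne_zero_iff.1 h).1

theorem chiJ_eq_zero_of_one_le (j : ℕ) {x : ℝ} (hx : 1 ≤ x) : chiJ j x = 0 := by
  by_contra hne
  have hle : (2 : ℝ) ^ j * (1 - x) ≤ 0 :=
    mul_nonpos_of_nonneg_of_nonpos (by positivity) (sub_nonpos.2 hx)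
  linarith [(mem_Ioo_of_chiJ_ne_zero hne).1]

theorem contDiffAt_chiJ (j : ℕ) {x : ℝ} (h0 : 0 ≤ x) (h1 : x < 1) :
    ContDiffAt ℝ ∞ (chiJ j) x := by
  rw [funext (chiJ_eq_div j)]
  exact (contDiff_phiJ j).contDiffAt.div (contDiffAt_tsum_phiJ h1) (tsum_phiJ_pos h0 h1).ne'

theorem tsum_phiJ_one_sub_pow_mul {n : ℕ} {u : ℝ} (hu : 2 ^ n * u ≤ 1 / 2) :
    ∑' i, phiJ i (1 - 2 ^ n * u) = ∑' i, phiJ i (1 - u) := by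
  simp_rw [← phiJ_add]
  refine (add_left_injective n).tsum_eq (f := fun i => phiJ i (1 - u)) fun i hi => ?_
  have hmem := (phiJ_ne_zero_iff.1 hi).1
  rw [sub_sub_cancel] at hmem
  have hu0 : 0 < u := pos_of_mul_pos_right (by linarith) (pow_nonneg zero_le_two i)
  by_contra hin
  have hlt : i < n := by
    by_contra hni
    exact hin ⟨i - n, Nat.sub_add_cancel (not_lt.1 hni)⟩
  have hpow : (2 : ℝ) ^ i * 2 ≤ 2 ^ n := by
    rw [← pow_succ]
    exact pow_le_pow_right₀ one_le_two hlt
  nlinarith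

-- The denominator `∑ φ_i` is dyadically self-similar on the support of `φ_i` only once `i ≥ 2`.
theorem chiJ_add {i : ℕ} (hi : 2 ≤ i) (n : ℕ) (u : ℝ) :
    chiJ (i + n) (1 - u) = chiJ i (1 - 2 ^ n * u) := by
  rw [chiJ_eq_div, chiJ_eq_div, phiJ_add]
  by_cases h : phiJ i (1 - 2 ^ n * u) = 0
  · rw [h, zero_div, zero_div]
  have hlt := (phiJ_ne_zero_iff.1 h).2
  rw [sub_sub_cancel] at hlt
  have h4 : (2 : ℝ) ^ 2 ≤ 2 ^ i := pow_le_pow_right₀ one_le_two hi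
  rw [tsum_phiJ_one_sub_pow_mul (by nlinarith)]

/-! ### The functions `h^z_{j,r}` -/

/-- The profile `u ↦ u^z χ_i(1 - u)`, for which `h^z_{i,1}(x) = radialProfile z i (1 - x²) e^{x²}`.
Since `χ_i(1 - u)` vanishes for `u ≤ 0`, the junk values of `u^z` there play no role. -/
noncomputable def radialProfile (z : ℂ) (i : ℕ) (u : ℝ) : ℂ := (u : ℂ) ^ z * chiJ i (1 - u)

theorem radialProfile_of_nonpos (z : ℂ) (i : ℕ) {u : ℝ} (hu : u ≤ 0) :
    radialProfile z i u = 0 := by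
  rw [radialProfile, chiJ_eq_zero_of_one_le i (by linarith), Complex.ofReal_zero, mul_zero]

theorem tsupport_radialProfile_subset (z : ℂ) (i : ℕ) :
    tsupport (radialProfile z i) ⊆ Icc (1 / 4 / 2 ^ i) (5 / 4 / 2 ^ i) := by
  refine closure_minimal (fun u hu => ?_) isClosed_Icc
  have hmem := mem_Ioo_of_chiJ_ne_zero (Complex.ofReal_ne_zero.1 (right_ne_zero_of_mul hu))
  rw [sub_sub_cancel] at hmem
  rw [mem_Icc, div_le_iff₀' (by positivity), le_div_iff₀' (by positivity)]
  exact ⟨hmem.1.le, hmem.2.le⟩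

theorem contDiffAt_ofReal_cpow_const (z : ℂ) {u : ℝ} (hu : 0 < u) :
    ContDiffAt ℝ ∞ (fun u : ℝ => (u : ℂ) ^ z) u := by
  have hcpow : AnalyticAt ℂ (fun w : ℂ => w ^ z) (u : ℂ) :=
    analyticAt_id.cpow analyticAt_const (Complex.ofReal_mem_slitPlane.2 hu)
  exact hcpow.restrictScalars.contDiffAt.comp u Complex.ofRealCLM.contDiff.contDiffAt

theorem contDiffAt_radialProfile (z : ℂ) (i : ℕ) {u : ℝ} (hu : u ≤ 1) :
    ContDiffAt ℝ ∞ (radialProfile z i) u := by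
  by_cases h : u ∈ tsupport (radialProfile z i)
  · have hu0 : 0 < u := lt_of_lt_of_le (by positivity) (tsupport_radialProfile_subset z i h).1
    have hχ : ContDiffAt ℝ ∞ (fun u => chiJ i (1 - u)) u :=
      (contDiffAt_chiJ i (sub_nonneg.2 hu) (sub_lt_self 1 hu0)).comp u (by fun_prop)
    exact (contDiffAt_ofReal_cpow_const z hu0).mul
      (Complex.ofRealCLM.contDiff.contDiffAt.comp u hχ)
  · exact contDiffAt_const.congr_of_eventuallyEq (notMem_tsupport_iff_eventuallyEq.1 h)

theorem contDiff_radialProfile (z : ℂ) {i : ℕ} (hi : i ≠ 0) : ContDiff ℝ ∞ (radialProfile z i) := by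
  refine contDiff_iff_contDiffAt.2 fun u => ?_
  by_cases h : u ∈ tsupport (radialProfile z i)
  · have hi2 : (2 : ℝ) ≤ 2 ^ i := le_self_pow₀ one_le_two hi
    refine contDiffAt_radialProfile z i ((tsupport_radialProfile_subset z i h).2.trans ?_)
    rw [div_le_one (by positivity)]
    linarith
  · exact contDiffAt_const.congr_of_eventuallyEq (notMem_tsupport_iff_eventuallyEq.1 h)

theorem radialProfile_add (z : ℂ) {i : ℕ} (hi : 2 ≤ i) (n : ℕ) (u : ℝ) :
    radialProfile z (i + n) u = ((2 ^ n : ℝ) : ℂ) ^ (-z) * radialProfile z i (2 ^ n * u) := by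
  have hn : ((2 ^ n : ℝ) : ℂ) ^ z ≠ 0 := by simp
  rcases le_total 0 u with hu | hu
  · rw [radialProfile, radialProfile, chiJ_add hi, Complex.ofReal_mul (2 ^ n) u,
      Complex.mul_cpow_ofReal_nonneg (by positivity) hu, Complex.cpow_neg, mul_assoc,
      inv_mul_cancel_left₀ hn]
  · rw [radialProfile_of_nonpos z _ hu, radialProfile_of_nonpos z i
      (mul_nonpos_of_nonneg_of_nonpos (by positivity) hu), mul_zero]

theorem hzjr_eq_comp_div (z : ℂ) (j : ℕ) (r x : ℝ) : hzjr z j r x = hzjr z j 1 (x / r) := by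
  simp only [hzjr, div_pow, one_pow, div_one]

theorem hzjr_one_eq (z : ℂ) (j : ℕ) (x : ℝ) :
    hzjr z j 1 x = radialProfile z j (1 - x ^ 2) * Complex.exp (x ^ 2) := by
  simp only [hzjr, one_pow, div_one, radialProfile, sub_sub_cancel]
  split_ifs with h
  · push_cast
    ring
  · rw [chiJ_eq_zero_of_one_le j (by linarith), Complex.ofReal_zero, mul_zero, mul_zero, zero_mul]

theorem contDiff_cexp_sq : ContDiff ℝ ∞ fun x : ℝ => Complex.exp ((x : ℂ) ^ 2) :=
  (Complex.ofRealCLM.contDiff.pow 2).cexp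

theorem contDiff_hzjr_one (z : ℂ) (j : ℕ) : ContDiff ℝ ∞ (hzjr z j 1) := by
  rw [funext (hzjr_one_eq z j)]
  refine ContDiff.mul (contDiff_iff_contDiffAt.2 fun x => ?_) contDiff_cexp_sq
  exact (contDiffAt_radialProfile z j (sub_le_self 1 (sq_nonneg x))).comp x
    (contDiff_const.sub (contDiff_id.pow 2)).contDiffAt

theorem hasCompactSupport_hzjr_one (z : ℂ) (j : ℕ) : HasCompactSupport (hzjr z j 1) := by
  refine HasCompactSupport.intro (isCompact_Icc (a := -1) (b := 1)) fun x hx => ?_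
  have hx1 : ¬x ^ 2 ≤ 1 := fun h => hx (abs_le.1 ((sq_le_one_iff_abs_le_one x).1 h))
  rw [hzjr_one_eq, radialProfile_of_nonpos z j (by linarith), zero_mul]

theorem hzjr_one_add_eq_smul_shellAmplitude (z : ℂ) {i : ℕ} (hi : 2 ≤ i) (n : ℕ) :
    hzjr z (i + n) 1 = ((2 ^ n : ℝ) : ℂ) ^ (-z) •
      shellAmplitude (radialProfile z i) (fun x => Complex.exp ((x : ℂ) ^ 2)) (2 ^ n) := by
  ext x
  rw [hzjr_one_eq, radialProfile_add z hi, mul_assoc, Pi.smul_apply, smul_eq_mul, shellAmplitude]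

theorem exists_integral_norm_iteratedDeriv_hzjr_one_add_le (z : ℂ) (m : ℕ) {i : ℕ} (hi : 2 ≤ i) :
    ∃ C, ∀ n : ℕ, ∫ x, ‖iteratedDeriv m (hzjr z (i + n) 1) x‖ ≤
      C * ((2 ^ n : ℝ) ^ (-z.re) * ((2 ^ n) ^ m / 2 ^ n)) := by
  have hw := contDiff_radialProfile z (two_pos.trans_le hi).ne'
  have hsupp : tsupport (radialProfile z i) ⊆ Icc 0 (5 / 4 / 2 ^ i) :=
    (tsupport_radialProfile_subset z i).trans (Icc_subset_Icc_left (by positivity))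
  obtain ⟨C, hC⟩ := exists_integral_norm_iteratedDeriv_shellAmplitude_le m hw hsupp
    contDiff_cexp_sq (by positivity)
  refine ⟨C, fun n => ?_⟩
  set F := shellAmplitude (radialProfile z i) (fun x => Complex.exp ((x : ℂ) ^ 2)) (2 ^ n)
  have hF : ContDiff ℝ m F := contDiff_infty.1 (contDiff_shellAmplitude hw contDiff_cexp_sq _) m
  have hnorm : ∀ x, ‖iteratedDeriv m (hzjr z (i + n) 1) x‖ =
      (2 ^ n : ℝ) ^ (-z.re) * ‖iteratedDeriv m F x‖ := fun x => by
    rw [hzjr_one_add_eq_smul_shellAmplitude z hi, iteratedDeriv_const_smul hF.contDiffAt,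
      norm_smul, Complex.norm_cpow_eq_rpow_re_of_pos (by positivity), Complex.neg_re]
  calc ∫ x, ‖iteratedDeriv m (hzjr z (i + n) 1) x‖
      = (2 ^ n : ℝ) ^ (-z.re) * ∫ x, ‖iteratedDeriv m F x‖ := by
        simp only [hnorm, integral_const_mul]
    _ ≤ (2 ^ n : ℝ) ^ (-z.re) * (C * (2 ^ n) ^ m / 2 ^ n) := by
        gcongr
        exact hC _ (one_le_pow₀ one_le_two)
    _ = C * ((2 ^ n : ℝ) ^ (-z.re) * ((2 ^ n) ^ m / 2 ^ n)) := by ring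

theorem exists_integral_norm_iteratedDeriv_hzjr_one_le (z : ℂ) (m : ℕ) :
    ∃ C, 0 < C ∧ ∀ j : ℕ, ∫ x, ‖iteratedDeriv m (hzjr z j 1) x‖ ≤
      C * ((2 ^ j : ℝ) ^ (-z.re) * ((2 ^ j) ^ m / 2 ^ j)) := by
  set W : ℕ → ℝ := fun j => (2 ^ j : ℝ) ^ (-z.re) * ((2 ^ j) ^ m / 2 ^ j)
  have hWpos : ∀ j, 0 < W j := fun j => by positivity
  have hWadd : ∀ n, W (2 + n) = W 2 * W n := fun n => by
    simp only [W, pow_add, Real.mul_rpow (pow_nonneg zero_le_two _) (pow_nonneg zero_le_two _)]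
    ring
  obtain ⟨C, hC⟩ := exists_integral_norm_iteratedDeriv_hzjr_one_add_le z m le_rfl
  have hbigO : (fun j => ∫ x, ‖iteratedDeriv m (hzjr z j 1) x‖) =O[atTop] W := by
    refine Asymptotics.IsBigO.of_bound (C / W 2) ?_
    filter_upwards [eventually_ge_atTop 2] with j hj
    obtain ⟨n, rfl⟩ := Nat.exists_eq_add_of_le hj
    rw [Real.norm_of_nonneg (integral_nonneg fun x => norm_nonneg _),
      Real.norm_of_nonneg (hWpos _).le, hWadd, ← mul_assoc, div_mul_cancel₀ _ (hWpos 2).ne']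
    exact hC n
  obtain ⟨C', hC'0, hC'⟩ := Asymptotics.bound_of_isBigO_nat_atTop hbigO
  refine ⟨C', hC'0, fun j => (le_norm_self _).trans ((hC' (hWpos j).ne').trans_eq ?_)⟩
  rw [Real.norm_of_nonneg (hWpos j).le]

theorem exists_abs_div_pow_mul_norm_angularFourier_hzjr_le (z : ℂ) (m : ℕ) :
    ∃ C, 0 < C ∧ ∀ r : ℝ, 0 < r → ∀ (j : ℕ) (t : ℝ),
      |t / (2 ^ j / r)| ^ m * ‖angularFourier (hzjr z j r) t‖ ≤
        C * ((2 ^ j : ℝ) ^ (-z.re) * (r / 2 ^ j)) := by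
  obtain ⟨C, hC0, hC⟩ := exists_integral_norm_iteratedDeriv_hzjr_one_le z m
  refine ⟨C, hC0, fun r hr j t => ?_⟩
  have hdecay : |r * t| ^ m * ‖angularFourier (hzjr z j 1) (r * t)‖ ≤
      C * ((2 ^ j : ℝ) ^ (-z.re) * ((2 ^ j) ^ m / 2 ^ j)) :=
    (abs_pow_mul_norm_angularFourier_le (contDiff_infty.1 (contDiff_hzjr_one z j) m)
      (hasCompactSupport_hzjr_one z j) _).trans (hC j)
  have hscale : |t / (2 ^ j / r)| = |r * t| / 2 ^ j := by
    rw [div_div_eq_mul_div, mul_comm, abs_div, abs_of_pos (by positivity : (0 : ℝ) < 2 ^ j)]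
  rw [funext (hzjr_eq_comp_div z j r), angularFourier_comp_div _ hr, hscale, norm_mul,
    Complex.norm_real, Real.norm_of_nonneg hr.le, div_pow]
  calc |r * t| ^ m / (2 ^ j) ^ m * (r * ‖angularFourier (hzjr z j 1) (r * t)‖)
      = r / (2 ^ j) ^ m * (|r * t| ^ m * ‖angularFourier (hzjr z j 1) (r * t)‖) := by ring
    _ ≤ r / (2 ^ j) ^ m * (C * ((2 ^ j : ℝ) ^ (-z.re) * ((2 ^ j) ^ m / 2 ^ j))) := by gcongr
    _ = C * ((2 ^ j : ℝ) ^ (-z.re) * (r / 2 ^ j)) := by field_simp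

theorem hzjr_fourier_tail_bound_general (z : ℂ) (k : ℕ) :
    ∃ c : ℝ, 0 < c ∧ ∀ s r : ℝ, 0 < s → 0 < r → ∀ j : ℕ,
      (∫ t in {t : ℝ | s ≤ |t|},
          ‖∫ x : ℝ, hzjr z j r x * Complex.exp (-(Complex.I * t * x))‖) ≤
        c * s ^ (-(k : ℤ)) * r ^ (-(k : ℤ)) * (2 : ℝ) ^ (((k : ℝ) - z.re) * j) := by
  obtain ⟨C, hC0, hC⟩ := exists_abs_div_pow_mul_norm_angularFourier_hzjr_le z k
  obtain ⟨C', hC0', hC'⟩ := exists_abs_div_pow_mul_norm_angularFourier_hzjr_le z (k + 2)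
  refine ⟨π * (C + C'), by positivity, fun s r hs hr j => ?_⟩
  have htail := setIntegral_norm_le_of_abs_div_pow_mul_le (by positivity) hs (hC r hr j)
    (hC' r hr j)
  have hpow : (2 : ℝ) ^ (((k : ℝ) - z.re) * j) = (2 ^ j) ^ k * (2 ^ j : ℝ) ^ (-z.re) := by
    rw [mul_comm, Real.rpow_mul zero_le_two, Real.rpow_natCast, sub_eq_add_neg,
      Real.rpow_add (by positivity), Real.rpow_natCast]
  refine htail.trans_eq ?_
  rw [hpow, zpow_neg, zpow_neg, zpow_natCast, zpow_natCast, div_div, div_pow, mul_pow]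
  field_simp

/-- Fix z with Re z ≥ 0. For every k there is c_k > 0 such that for all s > 0, r > 0 and j,
∫_{|t| ≥ s} |ĥ^z_{j,r}(t)| dt ≤ c_k s^{−k} r^{−k} 2^{(k − Re z)j}, where
ĥ^z_{j,r}(t) = ∫_ℝ h^z_{j,r}(ξ) e^{−itξ} dξ. -/
theorem hzjr_fourier_tail_bound (z : ℂ) (hz : 0 ≤ z.re) :
    ∀ k : ℕ, ∃ c : ℝ, 0 < c ∧ ∀ s r : ℝ, 0 < s → 0 < r → ∀ j : ℕ,
      (∫ t in {t : ℝ | s ≤ |t|},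
          ‖∫ x : ℝ, hzjr z j r x * Complex.exp (-(Complex.I * t * x))‖) ≤
        c * s ^ (-(k : ℤ)) * r ^ (-(k : ℤ)) * (2 : ℝ) ^ (((k : ℝ) - z.re) * j) :=
  hzjr_fourier_tail_bound_general z
end

section
/- Let l ≥ 1 be an integer, ρ₀ ≥ 0, and z ∈ ℂ with Re z ≥ 0. For every multi-index α there exists a constant c = c(α, l, z) > 0 such that for all R > ρ₀² and all H ∈ ℝ^l with H ≠ 0, |∂_H^α [ 𝒥_{z+l/2}(√(R − ρ₀²) ‖H‖) ]| ≤ c (R − ρ₀²)^{|α|/2 − (Re z/2 + (l+1)/4)} ‖H‖^{−(Re z + (l+1)/2)}. -/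
open Real MeasureTheory

/-- 𝒥_ν(t) = (2^ν Γ(ν+1/2) Γ(1/2))^{−1} ∫_{−1}^1 e^{ist} (1−s²)^{ν−1/2} ds,
which for t > 0 equals t^{−ν} J_ν(t). -/
noncomputable def Jmod (ν : ℂ) (t : ℝ) : ℂ :=
  ((2 : ℂ) ^ ν * Complex.Gamma (ν + 1 / 2) * Complex.Gamma (1 / 2))⁻¹ *
    ∫ s in (-1 : ℝ)..1, Complex.exp (Complex.I * s * t) * ((1 - s ^ 2 : ℝ) : ℂ) ^ (ν - 1 / 2)

/-- Iterated partial derivative of a function on ℝ^l along a list of coordinate directions. -/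
noncomputable def mderiv {l : ℕ} : List (Fin l) → (EuclideanSpace ℝ (Fin l) → ℂ) →
    EuclideanSpace ℝ (Fin l) → ℂ
  | [], f => f
  | i :: L, f => fun x => fderiv ℝ (mderiv L f) x (EuclideanSpace.single i 1)

/-- The partial derivative ∂^α of a function on ℝ^l associated with the multi-index
α : Fin l → ℕ (α i derivatives in the i-th coordinate direction). -/
noncomputable def partialD {l : ℕ} (α : Fin l → ℕ) (f : EuclideanSpace ℝ (Fin l) → ℂ) :
    EuclideanSpace ℝ (Fin l) → ℂ :=
  mderiv ((List.finRange l).flatMap fun i => List.replicate (α i) i) f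

/-!
On `[-1, 1]` the weight `w_ν(s) = (1 - s²)^(ν - 1/2)` satisfies `w_{ν+1}' = -(2ν + 1) s w_ν` and
`w_{ν+1} = (1 - s²) w_ν`. Differentiating the Poisson integral and integrating by parts therefore
gives `𝒥_ν' = -t 𝒥_{ν+1}`, and a second differentiation gives Bessel's equation
`y'' + (2ν + 1)/t y' + y = 0` for `y = 𝒥_ν`.

Then `V = t^(ν + 1/2) 𝒥_ν` solves `V'' + V = (ν² - 1/4)/t² V`, an integrable perturbation of the
harmonic oscillator, so the energy `|V|² + |V'|²` is bounded on `[1, ∞)` by Grönwall's inequality: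
`|𝒥_ν(t)| ≲ (1 + t)^(-(Re ν + 1/2))`.

The gradient of `x ↦ 𝒥_ν(‖x‖)` is `-𝒥_{ν+1}(‖x‖) x`: each derivative raises `ν` by one, hence
improves the decay by one power of `1 + ‖x‖`, and this pays for the linear factor `x`. So all
derivatives decay like `𝒥_ν` itself, and the powers of `R - ρ₀²` come from scaling.
-/

section OscillatoryIntegral

/-- The Fourier-type integral `∫ₐᵇ e^{ist} h(s) ds` of an amplitude `h`, as a function of the
frequency `t`; the Poisson integral is the case of the amplitude `poissonWeight ν`. -/
noncomputable def oscIntegral (a b : ℝ) (h : ℝ → ℂ) (t : ℝ) : ℂ :=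
  ∫ s in a..b, Complex.exp (Complex.I * s * t) * h s

variable {a b : ℝ} {h : ℝ → ℂ}

lemma norm_exp_I_mul_mul (s t : ℝ) : ‖Complex.exp (Complex.I * s * t)‖ = 1 := by
  simp [Complex.norm_exp]

lemma hasDerivAt_oscIntegral (hh : IntervalIntegrable h volume a b) (t : ℝ) :
    HasDerivAt (oscIntegral a b h) (oscIntegral a b (fun s => Complex.I * s * h s) t) t := by
  have hsh : IntervalIntegrable (fun s : ℝ => Complex.I * s * h s) volume a b :=
    hh.continuousOn_mul (by fun_prop)
  have hexp {k : ℝ → ℂ} (hk : IntervalIntegrable k volume a b) (t : ℝ) :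
      IntervalIntegrable (fun s : ℝ => Complex.exp (Complex.I * s * t) * k s) volume a b :=
    hk.continuousOn_mul (by fun_prop)
  refine (intervalIntegral.hasDerivAt_integral_of_dominated_loc_of_deriv_le
    (F := fun (t s : ℝ) => Complex.exp (Complex.I * s * t) * h s)
    (F' := fun (t s : ℝ) => Complex.exp (Complex.I * s * t) * (Complex.I * s * h s))
    (bound := fun s => ‖Complex.I * s * h s‖) Filter.univ_mem
    (.of_forall fun t => (hexp hh t).aestronglyMeasurable_restrict_uIoc) (hexp hh t)
    (hexp hsh t).aestronglyMeasurable_restrict_uIoc (.of_forall fun s _ t _ => ?_) hsh.norm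
    (.of_forall fun s _ t _ => ?_)).2
  · rw [norm_mul, norm_exp_I_mul_mul, one_mul]
  · have hlin : HasDerivAt (fun t : ℝ => Complex.I * s * (t : ℂ)) (Complex.I * s) t := by
      simpa using (Complex.ofRealCLM.hasDerivAt (x := t)).const_mul (Complex.I * s)
    exact (hlin.cexp.mul_const (h s)).congr_deriv (by ring)

lemma oscIntegral_const_mul (c : ℂ) (t : ℝ) :
    oscIntegral a b (fun s => c * h s) t = c * oscIntegral a b h t := by
  simp only [oscIntegral, mul_left_comm _ c, intervalIntegral.integral_const_mul]

lemma oscIntegral_sub {k : ℝ → ℂ} (hh : IntervalIntegrable h volume a b)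
    (hk : IntervalIntegrable k volume a b) (t : ℝ) :
    oscIntegral a b (fun s => h s - k s) t = oscIntegral a b h t - oscIntegral a b k t := by
  simp only [oscIntegral, mul_sub]
  exact intervalIntegral.integral_sub (hh.continuousOn_mul (by fun_prop))
    (hk.continuousOn_mul (by fun_prop))

lemma oscIntegral_deriv_eq_neg_mul {h' : ℝ → ℂ} (hc : ContinuousOn h (Set.uIcc a b))
    (hd : ∀ s ∈ Set.Ioo (min a b) (max a b), HasDerivAt h (h' s) s)
    (hi : IntervalIntegrable h' volume a b) (ha : h a = 0) (hb : h b = 0) (t : ℝ) :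
    oscIntegral a b h' t = -(Complex.I * t) * oscIntegral a b h t := by
  have hexp (s : ℝ) : HasDerivAt (fun s : ℝ => Complex.exp (Complex.I * s * t))
      (Complex.I * t * Complex.exp (Complex.I * s * t)) s := by
    have hlin : HasDerivAt (fun s : ℝ => Complex.I * (s : ℂ) * t) (Complex.I * t) s := by
      simpa using ((Complex.ofRealCLM.hasDerivAt (x := s)).const_mul Complex.I).mul_const (t : ℂ)
    exact hlin.cexp.congr_deriv (mul_comm _ _)
  rw [oscIntegral, intervalIntegral.integral_mul_deriv_eq_deriv_mul_of_hasDerivAt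
    (by fun_prop) hc (fun s _ => hexp s) hd (Continuous.intervalIntegrable (by fun_prop) _ _) hi]
  simp only [ha, hb, mul_zero, sub_zero, zero_sub, mul_assoc _ (Complex.exp _),
    intervalIntegral.integral_const_mul, oscIntegral, neg_mul]

end OscillatoryIntegral

section PoissonWeight

/-- The weight `(1 - s²)^(ν - 1/2)` of the Poisson integral. -/
noncomputable def poissonWeight (ν : ℂ) (s : ℝ) : ℂ := ((1 - s ^ 2 : ℝ) : ℂ) ^ (ν - 1 / 2)

/-- The constant `(2^ν Γ(ν + 1/2) Γ(1/2))⁻¹` normalising the Poisson integral. -/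
noncomputable def poissonConst (ν : ℂ) : ℂ :=
  ((2 : ℂ) ^ ν * Complex.Gamma (ν + 1 / 2) * Complex.Gamma (1 / 2))⁻¹

variable {ν : ℂ}

lemma add_half_ne_zero (hν : -1 / 2 < ν.re) : ν + 1 / 2 ≠ 0 := by
  refine Complex.ne_zero_of_re_pos ?_
  simp only [one_div, Complex.add_re, Complex.inv_re, Complex.re_ofNat, Complex.normSq_ofNat]
  linarith

lemma poissonWeight_add_one (hν : ν + 1 / 2 ≠ 0) (s : ℝ) :
    poissonWeight (ν + 1) s = (1 - (s : ℂ) ^ 2) * poissonWeight ν s := by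
  have hexp : ν + 1 - 1 / 2 = ν - 1 / 2 + 1 := by ring
  have hbase : ((1 - s ^ 2 : ℝ) : ℂ) = 1 - (s : ℂ) ^ 2 := by push_cast; rfl
  unfold poissonWeight
  rw [← hbase]
  rcases eq_or_ne ((1 - s ^ 2 : ℝ) : ℂ) 0 with h0 | h0
  · rw [h0, zero_mul, Complex.zero_cpow]
    rwa [show ν + 1 - 1 / 2 = ν + 1 / 2 by ring]
  · rw [hexp, Complex.cpow_add _ _ h0, Complex.cpow_one, mul_comm]

lemma intervalIntegrable_poissonWeight (hν : -1 / 2 < ν.re) :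
    IntervalIntegrable (poissonWeight ν) volume (-1) 1 := by
  have hre : 0 < (ν - 1 / 2 + 1).re := by norm_num; linarith
  -- The substitution `x = (s + 1) / 2` in the beta integral.
  have hbeta : IntervalIntegrable (fun s : ℝ => ((4 : ℝ) : ℂ) ^ (ν - 1 / 2) *
      (((1 / 2 * (s + 1) : ℝ) : ℂ) ^ (ν - 1 / 2) *
        ((1 - 1 / 2 * (s + 1) : ℝ) : ℂ) ^ (ν - 1 / 2))) volume (-1) 1 := by
    convert (((Complex.betaIntegral_convergent hre hre).comp_mul_left
      (c := 1 / 2)).comp_add_right 1).const_mul (((4 : ℝ) : ℂ) ^ (ν - 1 / 2)) using 1 <;>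
      norm_num
  refine hbeta.congr fun s hs => ?_
  rw [Set.uIoc_of_le (by norm_num)] at hs
  have hplus : 0 ≤ 1 / 2 * (s + 1) := by linarith [hs.1]
  have hminus : 0 ≤ 1 - 1 / 2 * (s + 1) := by linarith [hs.2]
  have hfactor : 1 - s ^ 2 = 4 * (1 / 2 * (s + 1)) * (1 - 1 / 2 * (s + 1)) := by ring
  rw [poissonWeight, hfactor, Complex.ofReal_mul (4 * _),
    Complex.mul_cpow_ofReal_nonneg (mul_nonneg zero_le_four hplus) hminus, Complex.ofReal_mul 4,
    Complex.mul_cpow_ofReal_nonneg zero_le_four hplus, mul_assoc]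

lemma continuous_poissonWeight (hν : 1 / 2 < ν.re) : Continuous (poissonWeight ν) :=
  (Complex.continuous_ofReal_cpow_const (y := ν - 1 / 2) (by simpa using hν)).comp
    (g := fun x : ℝ => (x : ℂ) ^ (ν - 1 / 2)) (f := fun s => 1 - s ^ 2) (by fun_prop)

lemma hasDerivAt_poissonWeight_add_one (ν : ℂ) {s : ℝ} (hs : s ∈ Set.Ioo (-1 : ℝ) 1) :
    HasDerivAt (poissonWeight (ν + 1)) (-(2 * ν + 1) * s * poissonWeight ν s) s := by
  have hpos : 0 < 1 - s ^ 2 := by nlinarith [hs.1, hs.2]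
  have hbase : HasDerivAt (fun s : ℝ => ((1 - s ^ 2 : ℝ) : ℂ)) ((-(2 * s) : ℝ) : ℂ) s :=
    HasDerivAt.ofReal_comp (by simpa using ((hasDerivAt_id s).pow 2).const_sub 1)
  have hpow : HasDerivAt (fun z : ℂ => z ^ (ν + 1 - 1 / 2))
      ((ν + 1 - 1 / 2) * ((1 - s ^ 2 : ℝ) : ℂ) ^ (ν + 1 - 1 / 2 - 1) * 1) ((1 - s ^ 2 : ℝ) : ℂ) :=
    (hasDerivAt_id _).cpow_const (Complex.ofReal_mem_slitPlane.2 hpos)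
  refine (hpow.comp s hbase).congr_deriv ?_
  rw [poissonWeight, show ν + 1 - 1 / 2 - 1 = ν - 1 / 2 by ring]
  push_cast
  ring

lemma poissonConst_eq (hν : ν + 1 / 2 ≠ 0) :
    poissonConst ν = (2 * ν + 1) * poissonConst (ν + 1) := by
  rw [poissonConst, poissonConst, show ν + 1 + 1 / 2 = (ν + 1 / 2) + 1 by ring,
    Complex.Gamma_add_one _ hν, Complex.cpow_add _ _ two_ne_zero, Complex.cpow_one]
  simp only [mul_inv]
  linear_combination -(((2 : ℂ) ^ ν)⁻¹ * (Complex.Gamma (ν + 1 / 2))⁻¹ *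
    (Complex.Gamma (1 / 2))⁻¹) * mul_inv_cancel₀ hν

end PoissonWeight

section BesselEquation

variable {ν : ℂ}

lemma Jmod_eq_poissonConst_mul (ν : ℂ) (t : ℝ) :
    Jmod ν t = poissonConst ν * oscIntegral (-1) 1 (poissonWeight ν) t := rfl

lemma poissonConst_mul_oscIntegral_mul_poissonWeight (hν : -1 / 2 < ν.re) (t : ℝ) :
    poissonConst ν * oscIntegral (-1) 1 (fun s => Complex.I * s * poissonWeight ν s) t =
      -t * Jmod (ν + 1) t := by
  have hν1 : 1 / 2 < (ν + 1).re := by simp only [Complex.add_re, Complex.one_re]; linarith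
  have hne := add_half_ne_zero hν
  have hend {s : ℝ} (hs : s ^ 2 = 1) : poissonWeight (ν + 1) s = 0 := by
    rw [poissonWeight_add_one hne, ← Complex.ofReal_pow, hs]; simp
  have hint : IntervalIntegrable (fun s : ℝ => -(2 * ν + 1) * s * poissonWeight ν s)
      volume (-1) 1 := (intervalIntegrable_poissonWeight hν).continuousOn_mul (by fun_prop)
  have hparts := oscIntegral_deriv_eq_neg_mul (continuous_poissonWeight hν1).continuousOn
    (fun s hs => hasDerivAt_poissonWeight_add_one ν (by simpa using hs)) hint
    (hend (by norm_num)) (hend (by norm_num)) t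
  have hfactor : (fun s : ℝ => -(2 * ν + 1) * s * poissonWeight ν s) =
      fun s : ℝ => Complex.I * (2 * ν + 1) * (Complex.I * s * poissonWeight ν s) := by
    funext s
    linear_combination -(2 * ν + 1) * s * poissonWeight ν s * Complex.I_mul_I
  rw [hfactor, oscIntegral_const_mul] at hparts
  rw [Jmod_eq_poissonConst_mul, poissonConst_eq hne]
  refine mul_left_cancel₀ Complex.I_ne_zero ?_
  linear_combination poissonConst (ν + 1) * hparts

lemma hasDerivAt_Jmod (hν : -1 / 2 < ν.re) (t : ℝ) :
    HasDerivAt (Jmod ν) (-t * Jmod (ν + 1) t) t := by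
  rw [← poissonConst_mul_oscIntegral_mul_poissonWeight hν]
  exact (hasDerivAt_oscIntegral (intervalIntegrable_poissonWeight hν) t).const_mul _

lemma hasDerivAt_neg_mul_Jmod_add_one (hν : -1 / 2 < ν.re) (t : ℝ) :
    HasDerivAt (fun t : ℝ => -(t : ℂ) * Jmod (ν + 1) t)
      ((2 * ν + 1) * Jmod (ν + 1) t - Jmod ν t) t := by
  have hne := add_half_ne_zero hν
  have hw := intervalIntegrable_poissonWeight hν
  have hw1 : IntervalIntegrable (poissonWeight (ν + 1)) volume (-1) 1 :=
    intervalIntegrable_poissonWeight (by simp only [Complex.add_re, Complex.one_re]; linarith)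
  have hsquare : (fun s : ℝ => Complex.I * s * (Complex.I * s * poissonWeight ν s)) =
      fun s => poissonWeight (ν + 1) s - poissonWeight ν s := by
    funext s
    rw [poissonWeight_add_one hne]
    linear_combination (s : ℂ) ^ 2 * poissonWeight ν s * Complex.I_mul_I
  simp only [← poissonConst_mul_oscIntegral_mul_poissonWeight hν]
  refine ((hasDerivAt_oscIntegral (hw.continuousOn_mul (by fun_prop)) t).const_mul
    (poissonConst ν)).congr_deriv ?_
  rw [hsquare, oscIntegral_sub hw1 hw, mul_sub, Jmod_eq_poissonConst_mul,
    Jmod_eq_poissonConst_mul, ← mul_assoc (2 * ν + 1), ← poissonConst_eq hne]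

end BesselEquation

section Energy

lemma le_mul_exp_sub_of_hasDerivAt_le {u u' Q q : ℝ → ℝ} {a : ℝ}
    (hu : ∀ t, a ≤ t → HasDerivAt u (u' t) t) (hQ : ∀ t, a ≤ t → HasDerivAt Q (q t) t)
    (hle : ∀ t, a ≤ t → u' t ≤ q t * u t) {t : ℝ} (ht : a ≤ t) :
    u t ≤ u a * Real.exp (Q t - Q a) := by
  have hderiv (t : ℝ) (ht : a ≤ t) : HasDerivAt (fun t => u t * Real.exp (-Q t))
      ((u' t - q t * u t) * Real.exp (-Q t)) t :=
    ((hu t ht).mul (hQ t ht).fun_neg.exp).congr_deriv (by ring)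
  have hanti : AntitoneOn (fun t => u t * Real.exp (-Q t)) (Set.Ici a) := by
    refine antitoneOn_of_hasDerivWithinAt_nonpos (convex_Ici a)
      (fun t ht => (hderiv t ht).continuousAt.continuousWithinAt)
      (fun t ht => (hderiv t (interior_subset ht)).hasDerivWithinAt) fun t ht => ?_
    exact mul_nonpos_of_nonpos_of_nonneg (sub_nonpos.2 (hle t (interior_subset ht)))
      (Real.exp_pos _).le
  calc u t = u t * Real.exp (-Q t) * Real.exp (Q t) := by
        rw [mul_assoc, ← Real.exp_add, neg_add_cancel, Real.exp_zero, mul_one]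
    _ ≤ u a * Real.exp (-Q a) * Real.exp (Q t) :=
        mul_le_mul_of_nonneg_right (hanti Set.self_mem_Ici ht ht) (Real.exp_pos _).le
    _ = u a * Real.exp (Q t - Q a) := by
        rw [mul_assoc, ← Real.exp_add, neg_add_eq_sub]

variable {F : Type*} [NormedAddCommGroup F] [InnerProductSpace ℝ F] {V W P : ℝ → F}

lemma oscillator_energy_le {Q q : ℝ → ℝ} {a : ℝ} (hV : ∀ t, a ≤ t → HasDerivAt V (W t) t)
    (hW : ∀ t, a ≤ t → HasDerivAt W (P t - V t) t) (hQ : ∀ t, a ≤ t → HasDerivAt Q (q t) t)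
    (hP : ∀ t, a ≤ t → ‖P t‖ ≤ q t * ‖V t‖) (hq : ∀ t, a ≤ t → 0 ≤ q t) {t : ℝ} (ht : a ≤ t) :
    ‖V t‖ ^ 2 + ‖W t‖ ^ 2 ≤ (‖V a‖ ^ 2 + ‖W a‖ ^ 2) * Real.exp (Q t - Q a) := by
  refine le_mul_exp_sub_of_hasDerivAt_le (u := fun t => ‖V t‖ ^ 2 + ‖W t‖ ^ 2)
    (fun t ht => (hV t ht).norm_sq.add (hW t ht).norm_sq) hQ (fun t ht => ?_) ht
  calc 2 * inner ℝ (V t) (W t) + 2 * inner ℝ (W t) (P t - V t)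
      = 2 * inner ℝ (W t) (P t) := by
        rw [inner_sub_right, real_inner_comm (W t) (V t)]; ring
    _ ≤ 2 * (‖W t‖ * (q t * ‖V t‖)) := by
        gcongr
        exact (real_inner_le_norm _ _).trans (by gcongr; exact hP t ht)
    _ = q t * (2 * ‖V t‖ * ‖W t‖) := by ring
    _ ≤ q t * (‖V t‖ ^ 2 + ‖W t‖ ^ 2) :=
        mul_le_mul_of_nonneg_left (two_mul_le_add_sq _ _) (hq t ht)

lemma exists_norm_le_of_oscillator {k : ℝ} (hV : ∀ t : ℝ, 1 ≤ t → HasDerivAt V (W t) t)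
    (hW : ∀ t : ℝ, 1 ≤ t → HasDerivAt W (P t - V t) t) (hk : 0 ≤ k)
    (hP : ∀ t : ℝ, 1 ≤ t → ‖P t‖ ≤ k / t ^ 2 * ‖V t‖) : ∃ C : ℝ, ∀ t : ℝ, 1 ≤ t → ‖V t‖ ≤ C := by
  have hQ (t : ℝ) (ht : 1 ≤ t) : HasDerivAt (fun t => -(k * t⁻¹)) (k / t ^ 2) t :=
    ((hasDerivAt_inv (by linarith)).const_mul k).neg.congr_deriv (by ring)
  refine ⟨√((‖V 1‖ ^ 2 + ‖W 1‖ ^ 2) * Real.exp k), fun t ht => Real.le_sqrt_of_sq_le ?_⟩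
  calc ‖V t‖ ^ 2 ≤ ‖V t‖ ^ 2 + ‖W t‖ ^ 2 := le_add_of_nonneg_right (sq_nonneg _)
    _ ≤ (‖V 1‖ ^ 2 + ‖W 1‖ ^ 2) * Real.exp (-(k * t⁻¹) - -(k * 1⁻¹)) :=
        oscillator_energy_le hV hW hQ hP (fun t _ => by positivity) ht
    _ ≤ (‖V 1‖ ^ 2 + ‖W 1‖ ^ 2) * Real.exp k := by
        have : 0 ≤ k * t⁻¹ := by positivity
        gcongr
        linarith

end Energy

section Decay

lemma hasDerivAt_ofReal_cpow_of_pos (c : ℂ) {t : ℝ} (ht : 0 < t) :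
    HasDerivAt (fun t : ℝ => (t : ℂ) ^ c) (c * (t : ℂ) ^ (c - 1)) t := by
  simpa using ((hasDerivAt_id (t : ℂ)).cpow_const (c := c)
    (Complex.ofReal_mem_slitPlane.2 ht)).comp_ofReal

lemma exists_norm_le_rpow_of_bessel_ode {y y' : ℝ → ℂ} {b : ℂ}
    (hy : ∀ t : ℝ, 1 ≤ t → HasDerivAt y (y' t) t)
    (hy' : ∀ t : ℝ, 1 ≤ t → HasDerivAt y' (-y t - 2 * b / t * y' t) t) :
    ∃ C : ℝ, ∀ t : ℝ, 1 ≤ t → ‖y t‖ ≤ C * t ^ (-b.re) := by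
  let V : ℝ → ℂ := fun t => (t : ℂ) ^ b * y t
  let W : ℝ → ℂ := fun t => (t : ℂ) ^ b * y' t + b * ((t : ℂ) ^ (b - 1) * y t)
  have hV (t : ℝ) (ht : 1 ≤ t) : HasDerivAt V (W t) t :=
    ((hasDerivAt_ofReal_cpow_of_pos b (by linarith)).mul (hy t ht)).congr_deriv
      (by simp only [W]; ring)
  have hW (t : ℝ) (ht : 1 ≤ t) : HasDerivAt W ((b ^ 2 - b) / (t : ℂ) ^ 2 * V t - V t) t := by
    have ht0 : 0 < t := by linarith
    have hne : (t : ℂ) ≠ 0 := by exact_mod_cast ht0.ne'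
    refine (((hasDerivAt_ofReal_cpow_of_pos b ht0).mul (hy' t ht)).add
      (((hasDerivAt_ofReal_cpow_of_pos (b - 1) ht0).mul (hy t ht)).const_mul b)).congr_deriv ?_
    simp only [V, Complex.cpow_sub _ _ hne, Complex.cpow_one]
    field_simp
    ring
  obtain ⟨C, hC⟩ := exists_norm_le_of_oscillator hV hW (norm_nonneg (b ^ 2 - b))
    fun t _ => by simp
  refine ⟨C, fun t ht => ?_⟩
  have ht0 : 0 < t := by linarith
  have hnorm : ‖V t‖ = ‖y t‖ * t ^ b.re := by
    simp only [V, norm_mul, Complex.norm_cpow_eq_rpow_re_of_pos ht0, mul_comm]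
  rw [Real.rpow_neg ht0.le, ← div_eq_mul_inv, le_div_iff₀ (Real.rpow_pos_of_pos ht0 _), ← hnorm]
  exact hC t ht

lemma exists_norm_le_one_add_rpow {F : Type*} [NormedAddCommGroup F] {f : ℝ → F} {a : ℝ}
    (hf : ContinuousOn f (Set.Icc 0 1)) (hdecay : ∃ C : ℝ, ∀ t : ℝ, 1 ≤ t → ‖f t‖ ≤ C * t ^ a) :
    ∃ C : ℝ, ∀ t : ℝ, 0 ≤ t → ‖f t‖ ≤ C * (1 + t) ^ a := by
  have hcont : ContinuousOn (fun t => ‖f t‖ * (1 + t) ^ (-a)) (Set.Icc 0 1) :=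
    hf.norm.mul (ContinuousOn.rpow_const (by fun_prop) fun t ht => .inl (by linarith [ht.1]))
  obtain ⟨M, hM⟩ := isCompact_Icc.bddAbove_image hcont
  obtain ⟨C, hC⟩ := hdecay
  have hC0 : 0 ≤ C := by simpa using (norm_nonneg _).trans (hC 1 le_rfl)
  refine ⟨max M (C * 2 ^ |a|), fun t ht => ?_⟩
  have hpos : 0 < 1 + t := by linarith
  rw [← div_le_iff₀ (Real.rpow_pos_of_pos hpos a), div_eq_mul_inv, ← Real.rpow_neg hpos.le]
  rcases le_total t 1 with h1 | h1
  · exact (hM ⟨t, ⟨ht, h1⟩, rfl⟩).trans (le_max_left _ _)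
  · have ht0 : 0 < t := by linarith
    have hbase : t ≤ 1 + t := by linarith
    refine le_trans ?_ (le_max_right _ _)
    calc ‖f t‖ * (1 + t) ^ (-a) ≤ C * t ^ a * (1 + t) ^ (-a) := by gcongr; exact hC t h1
      _ = C * ((1 + t) / t) ^ (-a) := by
          rw [Real.div_rpow hpos.le ht0.le, Real.rpow_neg ht0.le, div_inv_eq_mul]; ring
      _ ≤ C * ((1 + t) / t) ^ |a| := by
          gcongr
          · rwa [one_le_div ht0]
          · exact neg_le_abs a
      _ ≤ C * 2 ^ |a| := by
          gcongr
          rw [div_le_iff₀ ht0]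
          linarith

lemma exists_norm_Jmod_le {ν : ℂ} (hν : -1 / 2 < ν.re) :
    ∃ C : ℝ, ∀ t : ℝ, 0 ≤ t → ‖Jmod ν t‖ ≤ C * (1 + t) ^ (-(ν.re + 1 / 2)) := by
  refine exists_norm_le_one_add_rpow
    (fun t _ => (hasDerivAt_Jmod hν t).continuousAt.continuousWithinAt) ?_
  have hbessel (t : ℝ) (ht : 1 ≤ t) : HasDerivAt (fun t : ℝ => -(t : ℂ) * Jmod (ν + 1) t)
      (-Jmod ν t - 2 * (ν + 1 / 2) / t * (-t * Jmod (ν + 1) t)) t := by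
    have hne : (t : ℂ) ≠ 0 := by exact_mod_cast (by linarith : t ≠ 0)
    refine (hasDerivAt_neg_mul_Jmod_add_one hν t).congr_deriv ?_
    field_simp
    ring
  simpa using exists_norm_le_rpow_of_bessel_ode (fun t _ => hasDerivAt_Jmod hν t) hbessel

end Decay

section Radial

-- The norm on `F →L[ℝ] E →L[ℝ] E →L[ℝ] F` is not found at the default depth.
set_option maxSynthPendingDepth 3

open InnerProductSpace

variable {E : Type*} [NormedAddCommGroup E] [InnerProductSpace ℝ E]
  {F : Type*} [NormedAddCommGroup F] [NormedSpace ℝ F] {ν : ℂ}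

/-- The rank-one map `v ↦ ⟪x, v⟫ k` as a bilinear function of `k` and `x`. Over `ℝ` the
conjugate-linearity of `InnerProductSpace.rankOne` in `x` is linearity, which is how it is typed
here. -/
noncomputable def realRankOne : F →L[ℝ] E →L[ℝ] E →L[ℝ] F := rankOne ℝ

lemma realRankOne_apply (k : F) (x v : E) : realRankOne k x v = inner ℝ x v • k :=
  rankOne_apply ..

lemma norm_realRankOne_le : ‖(realRankOne : F →L[ℝ] E →L[ℝ] E →L[ℝ] F)‖ ≤ 1 :=
  ContinuousLinearMap.opNorm_le_bound₂ _ zero_le_one fun k x =>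
    (norm_rankOne (𝕜 := ℝ) k x).trans_le (by rw [one_mul])

lemma hasFDerivAt_norm {x : E} (hx : x ≠ 0) :
    HasFDerivAt (fun y : E => ‖y‖) (‖x‖⁻¹ • innerSL ℝ x) x := by
  have hsqrt := (hasStrictFDerivAt_norm_sq x).hasFDerivAt.sqrt
    (pow_ne_zero 2 (norm_ne_zero_iff.2 hx))
  simp only [Real.sqrt_sq (norm_nonneg _)] at hsqrt
  exact hsqrt.congr_fderiv (by module)

lemma hasFDerivAt_comp_norm {g : ℝ → F} {k : F} {x : E} (hg : HasDerivAt g (‖x‖ • k) ‖x‖) :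
    HasFDerivAt (fun y : E => g ‖y‖) (realRankOne k x) x := by
  rcases eq_or_ne x 0 with rfl | hx
  · rw [norm_zero, zero_smul] at hg
    rw [map_zero]
    refine .of_isLittleO ?_
    rw [← Asymptotics.isLittleO_norm_right]
    simpa [Function.comp_def] using
      hg.isLittleO.comp_tendsto (continuous_norm.tendsto' (0 : E) 0 norm_zero)
  · refine (hg.hasFDerivAt.comp x (hasFDerivAt_norm hx)).congr_fderiv ?_
    ext v
    have hscalar : ‖x‖⁻¹ * inner ℝ x v * ‖x‖ = inner ℝ x v := by
      rw [mul_right_comm, inv_mul_cancel₀ (norm_ne_zero_iff.2 hx), one_mul]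
    simp [realRankOne_apply, smul_smul, hscalar, ← mul_assoc]

lemma hasFDerivAt_Jmod_norm (hν : -1 / 2 < ν.re) (x : E) :
    HasFDerivAt (fun x : E => Jmod ν ‖x‖) (realRankOne (-Jmod (ν + 1) ‖x‖) x) x :=
  hasFDerivAt_comp_norm ((hasDerivAt_Jmod hν ‖x‖).congr_deriv (by simp))

lemma contDiff_Jmod_norm (hν : -1 / 2 < ν.re) (n : ℕ) :
    ContDiff ℝ n (fun x : E => Jmod ν ‖x‖) := by
  induction n generalizing ν with
  | zero =>
    exact contDiff_zero.2 (continuous_iff_continuousAt.2 fun x =>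
      (hasFDerivAt_Jmod_norm hν x).continuousAt)
  | succ n ih =>
    have hν1 : -1 / 2 < (ν + 1).re := by simp only [Complex.add_re, Complex.one_re]; linarith
    exact contDiff_succ_iff_hasFDerivAt.2
      ⟨_, (realRankOne.contDiff.comp (ih hν1).neg).clm_apply contDiff_id, hasFDerivAt_Jmod_norm hν⟩

lemma norm_iteratedFDeriv_id_le {𝕜 G : Type*} [NontriviallyNormedField 𝕜] [NormedAddCommGroup G]
    [NormedSpace 𝕜 G] (n : ℕ) (x : G) : ‖iteratedFDeriv 𝕜 n (id : G → G) x‖ ≤ 1 + ‖x‖ := by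
  have hfderiv : fderiv 𝕜 (id : G → G) = fun _ => ContinuousLinearMap.id 𝕜 G :=
    funext fun _ => fderiv_id
  rcases n with _ | n
  · simp
  rw [← norm_iteratedFDeriv_fderiv, hfderiv]
  rcases n with _ | n
  · rw [norm_iteratedFDeriv_zero]
    exact ContinuousLinearMap.norm_id_le.trans (by simp)
  · rw [iteratedFDeriv_succ_const, Pi.zero_apply, norm_zero]
    positivity

lemma norm_iteratedFDeriv_realRankOne_le {k : E → F} {n : ℕ} (hk : ContDiff ℝ n k) (x : E) :
    ‖iteratedFDeriv ℝ n (fun x => realRankOne (k x) x) x‖ ≤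
      (∑ i ∈ Finset.range (n + 1), n.choose i * ‖iteratedFDeriv ℝ i k x‖) * (1 + ‖x‖) := by
  refine ((realRankOne : F →L[ℝ] E →L[ℝ] E →L[ℝ] F).norm_iteratedFDeriv_le_of_bilinear_of_le_one
    hk contDiff_id x le_rfl norm_realRankOne_le).trans ?_
  rw [Finset.sum_mul]
  gcongr
  exact norm_iteratedFDeriv_id_le _ _

lemma exists_norm_iteratedFDeriv_Jmod_norm_le (hν : -1 / 2 < ν.re) (n : ℕ) :
    ∃ C : ℝ, ∀ x : E, ‖iteratedFDeriv ℝ n (fun x : E => Jmod ν ‖x‖) x‖ ≤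
      C * (1 + ‖x‖) ^ (-(ν.re + 1 / 2)) := by
  induction n using Nat.strong_induction_on generalizing ν with
  | h n ih =>
  rcases n with _ | n
  · obtain ⟨C, hC⟩ := exists_norm_Jmod_le hν
    exact ⟨C, fun x => by simpa only [norm_iteratedFDeriv_zero] using hC ‖x‖ (norm_nonneg x)⟩
  have hν1 : -1 / 2 < (ν + 1).re := by simp only [Complex.add_re, Complex.one_re]; linarith
  choose! C hC using fun i hi => ih i hi hν1
  refine ⟨∑ i ∈ Finset.range (n + 1), n.choose i * C i, fun x => ?_⟩
  have hfderiv : fderiv ℝ (fun x : E => Jmod ν ‖x‖) =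
      fun x => realRankOne (-Jmod (ν + 1) ‖x‖) x :=
    funext fun x => (hasFDerivAt_Jmod_norm hν x).fderiv
  have hpos : 0 < 1 + ‖x‖ := by positivity
  have hpow : (1 + ‖x‖) ^ (-((ν + 1).re + 1 / 2)) * (1 + ‖x‖) = (1 + ‖x‖) ^ (-(ν.re + 1 / 2)) := by
    rw [← Real.rpow_add_one hpos.ne', Complex.add_re, Complex.one_re]
    ring_nf
  rw [← norm_iteratedFDeriv_fderiv, hfderiv, ← hpow, ← mul_assoc, Finset.sum_mul]
  refine (norm_iteratedFDeriv_realRankOne_le (contDiff_Jmod_norm hν1 n).neg x).trans ?_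
  refine mul_le_mul_of_nonneg_right (Finset.sum_le_sum fun i hi => ?_) hpos.le
  have hneg : iteratedFDeriv ℝ i (fun x : E => -Jmod (ν + 1) ‖x‖) x =
      -iteratedFDeriv ℝ i (fun x : E => Jmod (ν + 1) ‖x‖) x := iteratedFDeriv_neg_apply
  rw [mul_assoc, hneg, norm_neg]
  gcongr
  exact hC i (Finset.mem_range.1 hi) x

lemma exists_norm_iteratedFDeriv_Jmod_norm_smul_le (hν : -1 / 2 < ν.re) (n : ℕ) :
    ∃ C : ℝ, 0 < C ∧ ∀ r : ℝ, 0 < r → ∀ x : E, x ≠ 0 →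
      ‖iteratedFDeriv ℝ n (fun x : E => Jmod ν ‖r • x‖) x‖ ≤
        C * r ^ (n - (ν.re + 1 / 2)) * ‖x‖ ^ (-(ν.re + 1 / 2)) := by
  obtain ⟨C, hC⟩ := exists_norm_iteratedFDeriv_Jmod_norm_le (E := E) hν n
  refine ⟨max C 1, by positivity, fun r hr x hx => ?_⟩
  have hx0 : 0 < ‖x‖ := norm_pos_iff.2 hx
  have hrx : 0 < r * ‖x‖ := mul_pos hr hx0
  calc ‖iteratedFDeriv ℝ n (fun x : E => Jmod ν ‖r • x‖) x‖
      = r ^ n * ‖iteratedFDeriv ℝ n (fun x : E => Jmod ν ‖x‖) (r • x)‖ := by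
        rw [iteratedFDeriv_comp_const_smul r (contDiff_Jmod_norm hν n), norm_smul, norm_pow,
          Real.norm_of_nonneg hr.le]
    _ ≤ r ^ n * (max C 1 * (1 + r * ‖x‖) ^ (-(ν.re + 1 / 2))) := by
        gcongr
        refine (hC (r • x)).trans ?_
        rw [norm_smul, Real.norm_of_nonneg hr.le]
        gcongr
        exact le_max_left _ _
    _ ≤ r ^ n * (max C 1 * (r * ‖x‖) ^ (-(ν.re + 1 / 2))) := by
        gcongr r ^ n * (max C 1 * ?_)
        exact Real.rpow_le_rpow_of_nonpos hrx (by linarith) (by linarith)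
    _ = max C 1 * r ^ (n - (ν.re + 1 / 2)) * ‖x‖ ^ (-(ν.re + 1 / 2)) := by
        rw [Real.mul_rpow hr.le hx0.le, sub_eq_add_neg, Real.rpow_add hr, Real.rpow_natCast]
        ring

end Radial

section PartialDerivatives

variable {l : ℕ} {f : EuclideanSpace ℝ (Fin l) → ℂ}

lemma mderiv_eq_iteratedFDeriv {L : List (Fin l)} (hf : ContDiff ℝ L.length f)
    (x : EuclideanSpace ℝ (Fin l)) :
    mderiv L f x =
      iteratedFDeriv ℝ L.length f x fun k => EuclideanSpace.single (L.get k) (1 : ℝ) := by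
  induction L generalizing x with
  | nil => simp [mderiv]
  | cons i L ih =>
    rw [List.length_cons, Nat.cast_add_one] at hf
    have hd : DifferentiableAt ℝ (iteratedFDeriv ℝ L.length f) x :=
      hf.differentiable_iteratedFDeriv (by exact_mod_cast Nat.lt_succ_self _) x
    simp only [mderiv, funext (ih (hf.of_le le_self_add))]
    rw [fderiv_continuousMultilinear_apply_const_apply hd]
    rfl

lemma norm_mderiv_le {L : List (Fin l)} (hf : ContDiff ℝ L.length f)
    (x : EuclideanSpace ℝ (Fin l)) : ‖mderiv L f x‖ ≤ ‖iteratedFDeriv ℝ L.length f x‖ := by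
  rw [mderiv_eq_iteratedFDeriv hf]
  simpa using (iteratedFDeriv ℝ L.length f x).le_opNorm
    fun k => EuclideanSpace.single (L.get k) (1 : ℝ)

lemma norm_partialD_le {α : Fin l → ℕ} (hf : ContDiff ℝ (∑ i, α i : ℕ) f)
    (x : EuclideanSpace ℝ (Fin l)) :
    ‖partialD α f x‖ ≤ ‖iteratedFDeriv ℝ (∑ i, α i) f x‖ := by
  have hlen : ((List.finRange l).flatMap fun i => List.replicate (α i) i).length = ∑ i, α i := by
    simp [List.length_flatMap, List.sum_ofFn, ← List.ofFn_eq_map]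
  rw [← hlen] at hf ⊢
  exact norm_mderiv_le hf x

end PartialDerivatives

theorem Jmod_multiindex_deriv_bound_general (l : ℕ) (z : ℂ) (hz : -1 / 2 < z.re + l / 2)
    (α : Fin l → ℕ) :
    ∃ c : ℝ, 0 < c ∧ ∀ ρ₀ R : ℝ, ρ₀ ^ 2 < R → ∀ H : EuclideanSpace ℝ (Fin l), H ≠ 0 →
      ‖partialD α (fun H' => Jmod (z + l / 2) (√(R - ρ₀ ^ 2) * ‖H'‖)) H‖ ≤
        c * (R - ρ₀ ^ 2) ^ ((∑ i, α i : ℝ) / 2 - (z.re / 2 + ((l : ℝ) + 1) / 4)) *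
          ‖H‖ ^ (-(z.re + ((l : ℝ) + 1) / 2)) := by
  have hre : (z + l / 2 : ℂ).re = z.re + (l : ℝ) / 2 := by simp
  have hν : -1 / 2 < (z + l / 2 : ℂ).re := by rwa [hre]
  obtain ⟨c, hc, hbound⟩ := exists_norm_iteratedFDeriv_Jmod_norm_smul_le
    (E := EuclideanSpace ℝ (Fin l)) hν (∑ i, α i)
  refine ⟨c, hc, fun ρ₀ R hR H hH => ?_⟩
  have hpos : 0 < R - ρ₀ ^ 2 := sub_pos.2 hR
  have hscale (H' : EuclideanSpace ℝ (Fin l)) :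
      √(R - ρ₀ ^ 2) * ‖H'‖ = ‖√(R - ρ₀ ^ 2) • H'‖ := by
    rw [norm_smul, Real.norm_of_nonneg (Real.sqrt_nonneg _)]
  simp only [hscale]
  refine (norm_partialD_le ((contDiff_Jmod_norm hν _).comp (contDiff_const_smul _)) H).trans
    ((hbound _ (Real.sqrt_pos.2 hpos) H hH).trans_eq ?_)
  rw [Real.sqrt_eq_rpow, ← Real.rpow_mul hpos.le, hre]
  push_cast
  ring_nf

/-- Bound for multi-index derivatives of H ↦ 𝒥_{z+l/2}(√(R−ρ₀²)‖H‖):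
|∂_H^α 𝒥_{z+l/2}(√(R−ρ₀²)‖H‖)| ≤ c (R−ρ₀²)^{|α|/2 − (Re z/2 + (l+1)/4)} ‖H‖^{−(Re z + (l+1)/2)}. -/
theorem Jmod_multiindex_deriv_bound (l : ℕ) (hl : 1 ≤ l) (ρ₀ : ℝ) (hρ : 0 ≤ ρ₀)
    (z : ℂ) (hz : 0 ≤ z.re) :
    ∀ α : Fin l → ℕ, ∃ c : ℝ, 0 < c ∧ ∀ R : ℝ, ρ₀ ^ 2 < R →
      ∀ H : EuclideanSpace ℝ (Fin l), H ≠ 0 →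
        ‖partialD α
            (fun H' => Jmod (z + l / 2) (Real.sqrt (R - ρ₀ ^ 2) * ‖H'‖)) H‖ ≤
          c * (R - ρ₀ ^ 2) ^ ((∑ i, α i : ℝ) / 2 - (z.re / 2 + ((l : ℝ) + 1) / 4)) *
            ‖H‖ ^ (-(z.re + ((l : ℝ) + 1) / 2)) := by
  intro α
  have hz' : 0 ≤ z.re + (l : ℝ) / 2 := by positivity
  obtain ⟨c, hc, hbound⟩ := Jmod_multiindex_deriv_bound_general l z (by linarith) α
  exact ⟨c, hc, hbound ρ₀⟩
end
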